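/- arXiv:1003.5615 — 2 statements merged into one kernel-verified Lean document; each statement's English description precedes it below -/
import Mathlib

section
/- Let n ≥ 2 be an integer and s ∈ ℂ such that 1 − 2s is not a nonpositive integer. Then the complex-valued function w(z) := (−z)^{s − n/2} · √(1−z) · ₂F₁(n/2 − s, 1 − s, 1 − 2s; 1/z), where (−z)^{s−n/2} := exp((s − n/2)·log(−z)) with the real logarithm, satisfies the radial hypergeometric equation E(n, s²) on the interval (−∞, −1). -/
open Real Set Complex

/-- A complex-valued function `w` of a real variable satisfies the radial hypergeometric
equation `E(n, τ)` on the set `I`: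
`z(1−z)w'' + (n/2 − nz)w' − (((n−1)/4)(n−1+1/(1−z)) − τ)w = 0` on `I`. -/
def SatisfiesRadialHGC (n : ℕ) (τ : ℂ) (w : ℝ → ℂ) (I : Set ℝ) : Prop :=
  ∀ z ∈ I, (z : ℂ) * (1 - z) * deriv (deriv w) z + ((n : ℂ) / 2 - n * z) * deriv w z
    - (((n : ℂ) - 1) / 4 * ((n : ℂ) - 1 + 1 / (1 - (z : ℂ))) - τ) * w z = 0

/-!
The factor `√(1 - z)` removes the term with `1 / (1 - z)`: it conjugates the radial operator of
dimension `ν` and `τ = s²` to Gauss's operator with parameters `a = ν/2 - s`, `b = ν/2 + s`,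
`c = ν/2`. The substitution `u(z) = (-z)⁻ᵃ F(1/z)` in turn conjugates Gauss's operator with
parameters `a, b, c` to the one with parameters `a, a - c + 1, a - b + 1`, which annihilates `₂F₁`
by the recurrence of its coefficients. With principal powers these identities hold for complex `z`
outside `[0, ∞)`, and the equation on `(-∞, -1)` is obtained by restriction.
-/

open scoped Topology

section PowerSeries

variable {𝕜 F : Type*} [NontriviallyNormedField 𝕜] [NormedAddCommGroup F] [NormedSpace 𝕜 F]

lemma hasFPowerSeriesOnBall_deriv [CompleteSpace F] {f : 𝕜 → F}
    {p : FormalMultilinearSeries 𝕜 𝕜 F} {x : 𝕜} {r : ENNReal}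
    (hf : HasFPowerSeriesOnBall f p x r) :
    HasFPowerSeriesOnBall (deriv f)
      ((ContinuousLinearMap.apply 𝕜 F (1 : 𝕜)).compFormalMultilinearSeries p.derivSeries) x r :=
  (ContinuousLinearMap.apply 𝕜 F (1 : 𝕜)).comp_hasFPowerSeriesOnBall hf.fderiv

lemma coeff_apply_one_derivSeries (p : FormalMultilinearSeries 𝕜 𝕜 F) (n : ℕ) :
    ((ContinuousLinearMap.apply 𝕜 F (1 : 𝕜)).compFormalMultilinearSeries p.derivSeries).coeff n =
      (n + 1) • p.coeff (n + 1) :=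
  p.derivSeries_coeff_one n

lemma hasSum_pow_smul_coeff {f : 𝕜 → F} {p : FormalMultilinearSeries 𝕜 𝕜 F} {r : ENNReal}
    (hf : HasFPowerSeriesOnBall f p 0 r) {x : 𝕜} (hx : x ∈ Metric.eball 0 r) :
    HasSum (fun n ↦ x ^ n • p.coeff n) (f x) := by
  simpa using hf.hasSum hx

lemma hasSum_pow_mul_of_succ {R : Type*} [Ring R] [TopologicalSpace R] [IsTopologicalRing R]
    {A B : ℕ → R} {x S : R} (hA : HasSum (fun n ↦ x ^ n * A n) S)
    (hB₀ : B 0 = 0) (hB : ∀ n, B (n + 1) = A n) :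
    HasSum (fun n ↦ x ^ n * B n) (x * S) := by
  rw [← hasSum_nat_add_iff' 1]
  simpa [hB₀, hB, pow_succ', mul_assoc] using hA.mul_left x

end PowerSeries

section Gauss

/-- Gauss's hypergeometric differential operator
`x(1 - x) ∂² + (c - (a + b + 1)x) ∂ - ab`, applied to `f` and evaluated at `x`. -/
noncomputable def hypergeometricOperator {𝕜 : Type*} [NontriviallyNormedField 𝕜] (a b c : 𝕜)
    (f : 𝕜 → 𝕜) (x : 𝕜) : 𝕜 :=
  x * (1 - x) * deriv (deriv f) x + (c - (a + b + 1) * x) * deriv f x - a * b * f x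

lemma ordinaryHypergeometricCoefficient_succ {𝕜 : Type*} [Field 𝕜] [CharZero 𝕜] (a b : 𝕜) {c : 𝕜}
    {n : ℕ} (hc : c ≠ -n) :
    (n + 1) * (c + n) * ordinaryHypergeometricCoefficient a b c (n + 1) =
      (a + n) * (b + n) * ordinaryHypergeometricCoefficient a b c n := by
  have hcn : c + n ≠ 0 := fun h ↦ hc (eq_neg_of_add_eq_zero_left h)
  have hn : (n : 𝕜) + 1 ≠ 0 := n.cast_add_one_ne_zero
  simp only [ordinaryHypergeometricCoefficient, ascPochhammer_succ_eval, Nat.factorial_succ,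
    Nat.cast_mul, Nat.cast_add, Nat.cast_one, mul_inv]
  field_simp

variable {𝕜 : Type*} [RCLike 𝕜]

lemma one_le_radius_ordinaryHypergeometricSeries (𝔸 : Type*) [NormedDivisionRing 𝔸]
    [NormedAlgebra 𝕜 𝔸] (a b c : 𝕜) :
    1 ≤ (ordinaryHypergeometricSeries 𝔸 a b c).radius := by
  by_cases h : ∀ k : ℕ, (k : 𝕜) ≠ -a ∧ (k : 𝕜) ≠ -b ∧ (k : 𝕜) ≠ -c
  · exact (ordinaryHypergeometricSeries_radius_eq_one 𝔸 a b c h).ge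
  · have hdeg : ∃ k : ℕ, a = -k ∨ b = -k ∨ c = -k := by
      simpa only [not_forall, not_and_or, not_not, eq_neg_iff_add_eq_zero, add_comm] using h
    obtain ⟨k, rfl | rfl | rfl⟩ := hdeg
    · simp only [ordinaryHypergeometric_radius_top_of_neg_nat₁, le_top]
    · simp only [ordinaryHypergeometric_radius_top_of_neg_nat₂, le_top]
    · simp only [ordinaryHypergeometric_radius_top_of_neg_nat₃, le_top]

lemma hasFPowerSeriesOnBall_ordinaryHypergeometric (a b c : 𝕜) :
    HasFPowerSeriesOnBall (₂F₁ a b c : 𝕜 → 𝕜) (ordinaryHypergeometricSeries 𝕜 a b c) 0 1 :=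
  have hrad := one_le_radius_ordinaryHypergeometricSeries 𝕜 a b c
  (FormalMultilinearSeries.hasFPowerSeriesOnBall _ (one_pos.trans_le hrad)).mono one_pos hrad

lemma mem_eball_zero_one {E : Type*} [SeminormedAddCommGroup E] {x : E} (hx : ‖x‖ < 1) :
    x ∈ Metric.eball 0 1 := by
  rw [← ENNReal.ofReal_one, Metric.eball_ofReal]
  exact mem_ball_zero_iff.2 hx

lemma analyticAt_ordinaryHypergeometric (a b c : 𝕜) {x : 𝕜} (hx : ‖x‖ < 1) :
    AnalyticAt 𝕜 (₂F₁ a b c : 𝕜 → 𝕜) x :=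
  (hasFPowerSeriesOnBall_ordinaryHypergeometric a b c).analyticAt_of_mem (mem_eball_zero_one hx)

theorem hypergeometricOperator_ordinaryHypergeometric (a b : 𝕜) {c : 𝕜} (hc : ∀ m : ℕ, c ≠ -m)
    {x : 𝕜} (hx : ‖x‖ < 1) :
    hypergeometricOperator a b c (₂F₁ a b c) x = 0 := by
  have hx' := mem_eball_zero_one hx
  have hp := hasFPowerSeriesOnBall_ordinaryHypergeometric a b c
  have hp' := hasFPowerSeriesOnBall_deriv hp
  have hF := hasSum_pow_smul_coeff hp hx'
  have hF' := hasSum_pow_smul_coeff hp' hx'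
  have hF'' := hasSum_pow_smul_coeff (hasFPowerSeriesOnBall_deriv hp') hx'
  simp only [coeff_apply_one_derivSeries, ordinaryHypergeometricSeries,
    FormalMultilinearSeries.coeff_ofScalars, nsmul_eq_mul, smul_eq_mul] at hF hF' hF''
  set A := ordinaryHypergeometricCoefficient a b c
  have hxF' : HasSum (fun n ↦ x ^ n * (n * A n)) (x * deriv (₂F₁ a b c) x) :=
    hasSum_pow_mul_of_succ hF' (by simp) fun n ↦ rfl
  have hxF'' : HasSum (fun n ↦ x ^ n * (n * ((n + 1 : ℕ) * A (n + 1))))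
      (x * deriv (deriv (₂F₁ a b c)) x) :=
    hasSum_pow_mul_of_succ hF'' (by simp) fun n ↦ rfl
  have hxxF'' : HasSum (fun n ↦ x ^ n * ((n - 1) * (n * A n)))
      (x * (x * deriv (deriv (₂F₁ a b c)) x)) :=
    hasSum_pow_mul_of_succ hxF'' (by simp) fun n ↦ by push_cast; ring
  have hlower := hxF''.add (hF'.mul_left c)
  have hupper := (hxxF''.add (hxF'.mul_left (a + b + 1))).add (hF.mul_left (a * b))
  have hsum : x * deriv (deriv (₂F₁ a b c)) x + c * deriv (₂F₁ a b c) x =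
      x * (x * deriv (deriv (₂F₁ a b c)) x) + (a + b + 1) * (x * deriv (₂F₁ a b c) x) +
        a * b * ₂F₁ a b c x := hlower.unique <| hupper.congr_fun fun n ↦ by
    have hrec := ordinaryHypergeometricCoefficient_succ a b (hc n)
    push_cast
    linear_combination x ^ n * hrec
  rw [hypergeometricOperator]
  linear_combination hsum

end Gauss

section SecondDerivative

variable {𝕜 : Type*} [NontriviallyNormedField 𝕜] {f g F : 𝕜 → 𝕜} {z : 𝕜}

lemma deriv_deriv_mul [CompleteSpace 𝕜] (hf : AnalyticAt 𝕜 f z) (hg : AnalyticAt 𝕜 g z) :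
    deriv (deriv fun y ↦ f y * g y) z =
      deriv (deriv f) z * g z + 2 * (deriv f z * deriv g z) + f z * deriv (deriv g) z := by
  have hderiv : deriv (fun y ↦ f y * g y) =ᶠ[𝓝 z] fun y ↦ deriv f y * g y + f y * deriv g y := by
    filter_upwards [hf.eventually_analyticAt, hg.eventually_analyticAt] with y hfy hgy
    exact deriv_fun_mul hfy.differentiableAt hgy.differentiableAt
  have hf' := hf.deriv.differentiableAt
  have hg' := hg.deriv.differentiableAt
  rw [hderiv.deriv_eq, deriv_fun_add (hf'.fun_mul hg.differentiableAt)
    (hf.differentiableAt.fun_mul hg'), deriv_fun_mul hf' hg.differentiableAt,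
    deriv_fun_mul hf.differentiableAt hg']
  ring

lemma analyticAt_comp_inv (hz : z ≠ 0) (hF : AnalyticAt 𝕜 F z⁻¹) :
    AnalyticAt 𝕜 (fun y ↦ F y⁻¹) z :=
  hF.fun_comp (analyticAt_inv hz)

lemma deriv_comp_inv (hz : z ≠ 0) (hF : DifferentiableAt 𝕜 F z⁻¹) :
    deriv (fun y ↦ F y⁻¹) z = -(z ^ 2)⁻¹ * deriv F z⁻¹ := by
  rw [mul_comm]
  exact (hF.hasDerivAt.comp z (hasDerivAt_inv hz)).deriv

lemma deriv_deriv_comp_inv [CompleteSpace 𝕜] (hz : z ≠ 0) (hF : AnalyticAt 𝕜 F z⁻¹) :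
    deriv (deriv fun y ↦ F y⁻¹) z =
      2 * (z ^ 3)⁻¹ * deriv F z⁻¹ + (z ^ 4)⁻¹ * deriv (deriv F) z⁻¹ := by
  have hderiv : deriv (fun y ↦ F y⁻¹) =ᶠ[𝓝 z] fun y ↦ -(y ^ 2)⁻¹ * deriv F y⁻¹ := by
    filter_upwards [isOpen_ne.mem_nhds hz,
      (continuousAt_inv₀ hz).eventually hF.eventually_analyticAt] with y hy hFy
    exact deriv_comp_inv hy hFy.differentiableAt
  have hsq : HasDerivAt (fun y : 𝕜 ↦ -(y ^ 2)⁻¹) (2 * (z ^ 3)⁻¹) z :=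
    ((hasDerivAt_pow 2 z).fun_inv (pow_ne_zero 2 hz)).fun_neg.congr_deriv
      (by field_simp; norm_num [mul_comm])
  have hF' := (analyticAt_comp_inv hz hF.deriv).differentiableAt
  rw [hderiv.deriv_eq, deriv_fun_mul hsq.differentiableAt hF', hsq.deriv,
    deriv_comp_inv hz hF.deriv.differentiableAt]
  field_simp

end SecondDerivative

section Conjugation

variable {p r z : ℂ} {u F : ℂ → ℂ}

lemma analyticAt_const_sub_cpow (hz : p - z ∈ slitPlane) :
    AnalyticAt ℂ (fun y ↦ (p - y) ^ r) z :=
  (analyticAt_const.sub analyticAt_id).cpow analyticAt_const hz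

lemma deriv_const_sub_cpow (hz : p - z ∈ slitPlane) :
    deriv (fun y ↦ (p - y) ^ r) z = -r * (p - z) ^ (r - 1) := by
  simpa using (((hasDerivAt_id z).const_sub p).cpow_const (c := r) hz).deriv

lemma deriv_deriv_const_sub_cpow (hz : p - z ∈ slitPlane) :
    deriv (deriv fun y ↦ (p - y) ^ r) z = r * (r - 1) * (p - z) ^ (r - 2) := by
  have hderiv : deriv (fun y ↦ (p - y) ^ r) =ᶠ[𝓝 z] fun y ↦ -r * (p - y) ^ (r - 1) := by
    filter_upwards [(continuous_const.sub continuous_id).continuousAt.eventually_mem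
      (isOpen_slitPlane.mem_nhds hz)] with y hy using deriv_const_sub_cpow hy
  rw [hderiv.deriv_eq, deriv_const_mul_field, deriv_const_sub_cpow hz]
  ring_nf

theorem hypergeometricOperator_neg_cpow_mul_comp_inv (a b c : ℂ) (hz : -z ∈ slitPlane)
    (hF : AnalyticAt ℂ F z⁻¹) :
    hypergeometricOperator a b c (fun y ↦ (-y) ^ (-a) * F y⁻¹) z =
      -z⁻¹ * (-z) ^ (-a) * hypergeometricOperator a (a - c + 1) (a - b + 1) F z⁻¹ := by
  have hz₀ : z ≠ 0 := neg_ne_zero.1 (slitPlane_ne_zero hz)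
  rw [← zero_sub] at hz
  have hg : AnalyticAt ℂ (fun y ↦ (-y) ^ (-a)) z := by
    simpa only [zero_sub] using analyticAt_const_sub_cpow (r := -a) hz
  have hg' : deriv (fun y ↦ (-y) ^ (-a)) z = a * (-z) ^ (-a - 1) := by
    simpa only [zero_sub, neg_neg] using deriv_const_sub_cpow (r := -a) hz
  have hg'' : deriv (deriv fun y ↦ (-y) ^ (-a)) z = -a * (-a - 1) * (-z) ^ (-a - 2) := by
    simpa only [zero_sub] using deriv_deriv_const_sub_cpow (r := -a) hz
  have hG := analyticAt_comp_inv hz₀ hF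
  rw [hypergeometricOperator, hypergeometricOperator, deriv_deriv_mul hg hG,
    deriv_fun_mul hg.differentiableAt hG.differentiableAt, hg', hg'',
    deriv_comp_inv hz₀ hF.differentiableAt, deriv_deriv_comp_inv hz₀ hF,
    cpow_sub _ _ (neg_ne_zero.2 hz₀), cpow_sub _ _ (neg_ne_zero.2 hz₀), cpow_one, cpow_ofNat]
  field_simp
  ring

/-- The differential operator of the radial equation `E(ν, τ)`, with the dimension `ν` and the
variable `z` allowed to be complex, applied to `w` and evaluated at `z`. -/
noncomputable def radialOperator (ν τ : ℂ) (w : ℂ → ℂ) (z : ℂ) : ℂ :=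
  z * (1 - z) * deriv (deriv w) z + (ν / 2 - ν * z) * deriv w z
    - ((ν - 1) / 4 * (ν - 1 + 1 / (1 - z)) - τ) * w z

theorem radialOperator_one_sub_cpow_mul (ν s : ℂ) (hz : 1 - z ∈ slitPlane)
    (hu : AnalyticAt ℂ u z) :
    radialOperator ν (s ^ 2) (fun y ↦ (1 - y) ^ (1 / 2 : ℂ) * u y) z =
      (1 - z) ^ (1 / 2 : ℂ) * hypergeometricOperator (ν / 2 - s) (ν / 2 + s) (ν / 2) u z := by
  have hz₁ : 1 - z ≠ 0 := slitPlane_ne_zero hz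
  have hg : AnalyticAt ℂ (fun y ↦ (1 - y) ^ (1 / 2 : ℂ)) z := analyticAt_const_sub_cpow hz
  rw [radialOperator, hypergeometricOperator, deriv_deriv_mul hg hu,
    deriv_fun_mul hg.differentiableAt hu.differentiableAt, deriv_const_sub_cpow hz,
    deriv_deriv_const_sub_cpow hz, cpow_sub _ _ hz₁, cpow_sub _ _ hz₁, cpow_one, cpow_ofNat]
  field_simp
  ring

end Conjugation

section Infinity

/-- The solution `(-z)^(s - ν/2) √(1 - z) ₂F₁(ν/2 - s, 1 - s; 1 - 2s; 1/z)` of the radial equation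
`E(ν, s²)`, continued to complex `z` outside `[0, ∞)` with `1 < |z|` by principal powers. -/
noncomputable def radialSolutionAtInfinity (ν s z : ℂ) : ℂ :=
  (1 - z) ^ (1 / 2 : ℂ) *
    ((-z) ^ (-(ν / 2 - s)) * ₂F₁ (ν / 2 - s) (1 - s) (1 - 2 * s) z⁻¹)

variable {z : ℂ}

lemma one_sub_mem_slitPlane_of_neg (hz : -z ∈ slitPlane) : 1 - z ∈ slitPlane := by
  simp only [mem_slitPlane_iff, sub_re, sub_im, neg_re, neg_im, one_re, one_im, zero_sub] at hz ⊢
  exact hz.imp_left fun h ↦ by linarith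

lemma norm_inv_lt_one {K : Type*} [NormedDivisionRing K] {z : K} (hz : 1 < ‖z‖) : ‖z⁻¹‖ < 1 := by
  simpa only [norm_inv] using inv_lt_one_of_one_lt₀ hz

lemma analyticAt_neg_cpow_mul_ordinaryHypergeometric_inv (a b c r : ℂ) (hz : -z ∈ slitPlane)
    (hz_norm : 1 < ‖z‖) :
    AnalyticAt ℂ (fun y ↦ (-y) ^ r * ₂F₁ a b c y⁻¹) z :=
  (analyticAt_id.fun_neg.cpow analyticAt_const hz).fun_mul <|
    analyticAt_comp_inv (neg_ne_zero.1 (slitPlane_ne_zero hz)) <|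
      analyticAt_ordinaryHypergeometric a b c (norm_inv_lt_one hz_norm)

lemma analyticAt_radialSolutionAtInfinity (ν s : ℂ) (hz : -z ∈ slitPlane) (hz_norm : 1 < ‖z‖) :
    AnalyticAt ℂ (radialSolutionAtInfinity ν s) z :=
  (analyticAt_const_sub_cpow (one_sub_mem_slitPlane_of_neg hz)).fun_mul <|
    analyticAt_neg_cpow_mul_ordinaryHypergeometric_inv _ _ _ _ hz hz_norm

theorem radialOperator_radialSolutionAtInfinity (ν : ℂ) {s : ℂ}
    (hs : ∀ m : ℕ, 1 - 2 * s ≠ -(m : ℂ)) (hz : -z ∈ slitPlane) (hz_norm : 1 < ‖z‖) :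
    radialOperator ν (s ^ 2) (radialSolutionAtInfinity ν s) z = 0 := by
  have hx := norm_inv_lt_one hz_norm
  have hF := analyticAt_ordinaryHypergeometric (ν / 2 - s) (1 - s) (1 - 2 * s) hx
  have hu := analyticAt_neg_cpow_mul_ordinaryHypergeometric_inv (ν / 2 - s) (1 - s) (1 - 2 * s)
    (-(ν / 2 - s)) hz hz_norm
  have hb : ν / 2 - s - ν / 2 + 1 = 1 - s := by ring
  have hc : ν / 2 - s - (ν / 2 + s) + 1 = 1 - 2 * s := by ring
  calc radialOperator ν (s ^ 2) (radialSolutionAtInfinity ν s) z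
    _ = _ := radialOperator_one_sub_cpow_mul ν s (one_sub_mem_slitPlane_of_neg hz) hu
    _ = 0 := by
      rw [hypergeometricOperator_neg_cpow_mul_comp_inv _ _ _ hz hF, hb, hc,
        hypergeometricOperator_ordinaryHypergeometric _ _ hs hx, mul_zero, mul_zero]

end Infinity

section Real

lemma deriv_comp_ofReal {f : ℂ → ℂ} {x : ℝ} (hf : DifferentiableAt ℂ f x) :
    deriv (fun y : ℝ ↦ f y) x = deriv f x :=
  hf.hasDerivAt.comp_ofReal.deriv

lemma deriv_deriv_comp_ofReal {f : ℂ → ℂ} {x : ℝ} (hf : AnalyticAt ℂ f x) :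
    deriv (deriv fun y : ℝ ↦ f y) x = deriv (deriv f) x := by
  have hderiv : deriv (fun y : ℝ ↦ f y) =ᶠ[𝓝 x] fun y : ℝ ↦ deriv f y := by
    filter_upwards [continuous_ofReal.continuousAt.eventually hf.eventually_analyticAt] with y hfy
    exact deriv_comp_ofReal hfy.differentiableAt
  rw [hderiv.deriv_eq, deriv_comp_ofReal hf.deriv.differentiableAt]

lemma radialSolutionAtInfinity_ofReal (ν s : ℂ) {z : ℝ} (hz : z < 0) :
    radialSolutionAtInfinity ν s z =
      Complex.exp ((s - ν / 2) * (Real.log (-z) : ℂ)) * (Real.sqrt (1 - z) : ℂ) *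
        ₂F₁ (ν / 2 - s) (1 - s) (1 - 2 * s) ((z : ℂ)⁻¹) := by
  have hpow : (-(z : ℂ)) ^ (-(ν / 2 - s)) = Complex.exp ((s - ν / 2) * (Real.log (-z) : ℂ)) := by
    rw [cpow_def_of_ne_zero (by exact_mod_cast (neg_pos.2 hz).ne'), ofReal_log (neg_pos.2 hz).le,
      ofReal_neg, neg_sub, mul_comm]
  have hsqrt : (1 - (z : ℂ)) ^ (1 / 2 : ℂ) = (Real.sqrt (1 - z) : ℂ) := by
    rw [Real.sqrt_eq_rpow, ofReal_cpow (by linarith)]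
    norm_num
  rw [radialSolutionAtInfinity, hpow, hsqrt]
  ring

theorem solution_at_infinity_general (ν s : ℂ) (hs : ∀ m : ℕ, 1 - 2 * s ≠ -(m : ℂ))
    (w : ℝ → ℂ)
    (hw : ∀ z : ℝ, z < -1 → w z = Complex.exp ((s - ν / 2) * (Real.log (-z) : ℂ)) *
      (Real.sqrt (1 - z) : ℂ) * ₂F₁ (ν / 2 - s) (1 - s) (1 - 2 * s) ((z : ℂ)⁻¹)) :
    ∀ z : ℝ, z < -1 → (z : ℂ) * (1 - z) * deriv (deriv w) z + (ν / 2 - ν * z) * deriv w z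
      - ((ν - 1) / 4 * (ν - 1 + 1 / (1 - (z : ℂ))) - s ^ 2) * w z = 0 := by
  intro z hz
  have hz_slit : -(z : ℂ) ∈ slitPlane := by
    rw [← ofReal_neg, ofReal_mem_slitPlane]
    linarith
  have hz_norm : 1 < ‖(z : ℂ)‖ := by
    rw [norm_real, Real.norm_eq_abs, lt_abs]
    right
    linarith
  have hw' : w =ᶠ[𝓝 z] fun y ↦ radialSolutionAtInfinity ν s y := by
    filter_upwards [Iio_mem_nhds hz] with y hy
    rw [hw y hy, radialSolutionAtInfinity_ofReal ν s (hy.trans neg_one_lt_zero)]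
  have hW := analyticAt_radialSolutionAtInfinity ν s hz_slit hz_norm
  rw [hw'.deriv.deriv_eq, hw'.deriv_eq, hw'.eq_of_nhds, deriv_deriv_comp_ofReal hW,
    deriv_comp_ofReal hW.differentiableAt]
  exact radialOperator_radialSolutionAtInfinity ν hs hz_slit hz_norm

end Real

theorem solution_at_infinity (n : ℕ) (hn : 2 ≤ n) (s : ℂ)
    (hs : ∀ m : ℕ, (1 : ℂ) - 2 * s ≠ -(m : ℂ))
    (w : ℝ → ℂ)
    (hw : ∀ z : ℝ, w z = Complex.exp ((s - (n : ℂ) / 2) * (Real.log (-z) : ℂ)) *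
      (Real.sqrt (1 - z) : ℂ) *
      ₂F₁ ((n : ℂ) / 2 - s) (1 - s) (1 - 2 * s) ((z : ℂ)⁻¹)) :
    SatisfiesRadialHGC n (s ^ 2) w (Iio (-1)) :=
  solution_at_infinity_general n s hs w fun z _ ↦ hw z
end

section
/- Let s ∈ ℂ be such that s is not a nonzero integer. Then lim_{z → 0⁺} ₂F₁(1 + s, 1 − s, 2; 1 − z) / log(1/z) = 1 / ( Γ(1 + s)·Γ(1 − s) ), where the limit is taken over real z decreasing to 0. -/
/-!
Euler's limit formula for `Γ` shows that the `n`-th coefficient of `₂F₁ a b (a + b)` is asymptotic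
to `L / n` with `L = Γ(a + b) / (Γ(a) Γ(b))`. Since `∑ xⁿ / n = log (1 / (1 - x))` diverges as
`x → 1⁻`, the numbers `(xⁿ / n) / log (1 / (1 - x))` are the weights of a summation method that is
regular by the Silverman–Toeplitz criterion, so the quotient of the two power series tends to the
limit `L` of the quotient of their coefficients. The theorem is the case `a = 1 + s`, `b = 1 - s`.
-/

open Real Set Complex Filter Topology

section Summation

variable {α ι E : Type*} [NormedAddCommGroup E] [NormedSpace ℝ E] [CompleteSpace E]

theorem tendsto_tsum_smul_of_tendsto_cofinite {l : Filter α} {w : α → ι → ℝ} {u : ι → E} {L : E}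
    (hw_nonneg : ∀ᶠ x in l, ∀ i, 0 ≤ w x i) (hw_sum : ∀ᶠ x in l, HasSum (w x) 1)
    (hw_tendsto : ∀ i, Tendsto (w · i) l (𝓝 0)) (hu : Tendsto u cofinite (𝓝 L)) :
    Tendsto (fun x ↦ ∑' i, w x i • u i) l (𝓝 L) := by
  rw [Metric.tendsto_nhds]
  intro ε hε
  obtain ⟨F, hF⟩ : ∃ F : Finset ι, ∀ i ∉ F, ‖u i - L‖ ≤ ε / 2 := by
    have hfin : {i | ¬ dist (u i) L < ε / 2}.Finite := Metric.tendsto_nhds.1 hu _ (half_pos hε)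
    refine ⟨hfin.toFinset, fun i hi ↦ ?_⟩
    rw [← dist_eq_norm]
    exact le_of_lt (by simpa using hi)
  have hF_small : ∀ᶠ x in l, ∑ i ∈ F, w x i * ‖u i - L‖ < ε / 2 := by
    have h : Tendsto (fun x ↦ ∑ i ∈ F, w x i * ‖u i - L‖) l (𝓝 0) := by
      simpa using tendsto_finsetSum F fun i _ ↦ (hw_tendsto i).mul_const ‖u i - L‖
    exact h.eventually_lt_const (half_pos hε)
  filter_upwards [hw_nonneg, hw_sum, hF_small] with x hx_nonneg hx_sum hx_small
  have hmajorant : HasSum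
      (fun i ↦ ε / 2 * w x i + (F : Set ι).indicator (fun i ↦ w x i * ‖u i - L‖) i)
      (ε / 2 * 1 + ∑ i ∈ F, w x i * ‖u i - L‖) :=
    (hx_sum.mul_left _).add (hasSum_subtype_iff_indicator.1 (F.hasSum _))
  have hbound (i : ι) : ‖w x i • (u i - L)‖ ≤
      ε / 2 * w x i + (F : Set ι).indicator (fun i ↦ w x i * ‖u i - L‖) i := by
    rw [norm_smul, Real.norm_of_nonneg (hx_nonneg i)]
    by_cases hi : i ∈ F
    · simpa [hi] using mul_nonneg (half_pos hε).le (hx_nonneg i)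
    · simpa [hi, mul_comm] using mul_le_mul_of_nonneg_left (hF i hi) (hx_nonneg i)
  have hsum : HasSum (fun i ↦ w x i • u i) (∑' i, w x i • (u i - L) + L) := by
    simpa [smul_sub] using
      (Summable.of_norm_bounded hmajorant.summable hbound).hasSum.add (hx_sum.smul_const L)
  calc dist (∑' i, w x i • u i) L = ‖∑' i, w x i • (u i - L)‖ := by
        rw [hsum.tsum_eq, dist_eq_norm, add_sub_cancel_right]
    _ ≤ ε / 2 * 1 + ∑ i ∈ F, w x i * ‖u i - L‖ := tsum_of_norm_bounded hmajorant hbound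
    _ < ε := by linarith

theorem tendsto_log_one_div_nhdsGT_zero :
    Tendsto (fun z : ℝ ↦ Real.log (1 / z)) (𝓝[>] 0) atTop := by
  simpa only [one_div, Function.comp_def] using Real.tendsto_log_atTop.comp tendsto_inv_nhdsGT_zero

theorem hasSum_one_sub_pow_div_log {z : ℝ} (hz : z ∈ Ioo 0 2) :
    HasSum (fun n : ℕ ↦ (1 - z) ^ (n + 1) / ((n : ℝ) + 1)) (Real.log (1 / z)) := by
  have h : |1 - z| < 1 := abs_lt.2 ⟨by linarith [hz.2], by linarith [hz.1]⟩
  simpa using Real.hasSum_pow_div_log_of_abs_lt_one h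

theorem tendsto_inv_log_smul_tsum_pow_smul {c : ℕ → E} {L : E}
    (hc : Tendsto (fun n : ℕ ↦ ((n : ℝ) + 1) • c n) atTop (𝓝 L)) :
    Tendsto (fun z : ℝ ↦ (Real.log (1 / z))⁻¹ • ∑' n, (1 - z) ^ (n + 1) • c n)
      (𝓝[>] 0) (𝓝 L) := by
  have hlog := tendsto_log_one_div_nhdsGT_zero
  have hIoo : ∀ᶠ z : ℝ in 𝓝[>] 0, z ∈ Ioo 0 1 := Ioo_mem_nhdsGT one_pos
  have hweight (z : ℝ) (n : ℕ) : (Real.log (1 / z))⁻¹ • (1 - z) ^ (n + 1) • c n =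
      ((Real.log (1 / z))⁻¹ * ((1 - z) ^ (n + 1) / ((n : ℝ) + 1))) • ((n : ℝ) + 1) • c n := by
    rw [smul_smul, smul_smul, mul_assoc, div_mul_cancel₀ _ n.cast_add_one_ne_zero]
  simp only [← tsum_const_smul'', hweight]
  refine tendsto_tsum_smul_of_tendsto_cofinite ?_ ?_ (fun n ↦ ?_) (Nat.cofinite_eq_atTop ▸ hc)
  · filter_upwards [hlog.eventually_ge_atTop 0, hIoo] with z hz_log hz n
    have : 0 ≤ 1 - z := sub_nonneg.2 hz.2.le
    positivity
  · filter_upwards [hlog.eventually_ne_atTop 0, hIoo] with z hz_log hz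
    have h := hasSum_one_sub_pow_div_log ⟨hz.1, hz.2.trans one_lt_two⟩
    simpa only [inv_mul_cancel₀ hz_log] using h.mul_left (Real.log (1 / z))⁻¹
  · have hpow : Tendsto (fun z : ℝ ↦ (1 - z) ^ (n + 1) / ((n : ℝ) + 1)) (𝓝[>] 0)
        (𝓝 ((1 - 0) ^ (n + 1) / ((n : ℝ) + 1))) :=
      Continuous.tendsto' (by fun_prop) _ _ rfl |>.mono_left nhdsWithin_le_nhds
    simpa using hlog.inv_tendsto_atTop.mul hpow

end Summation

section PowerSeries

variable {𝕂 𝔸 : Type*} [RCLike 𝕂] [NormedDivisionRing 𝔸] [NormedAlgebra 𝕂 𝔸] [CompleteSpace 𝔸]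
  {a b c : 𝕂}

theorem hasSum_ordinaryHypergeometric
    (habc : ∀ n : ℕ, (n : 𝕂) ≠ -a ∧ (n : 𝕂) ≠ -b ∧ (n : 𝕂) ≠ -c) {x : 𝔸} (hx : ‖x‖ < 1) :
    HasSum (fun n ↦ ordinaryHypergeometricCoefficient a b c n • x ^ n) (₂F₁ a b c x) := by
  have hball : x ∈ Metric.eball 0 (ordinaryHypergeometricSeries 𝔸 a b c).radius := by
    rw [ordinaryHypergeometricSeries_radius_eq_one 𝔸 a b c habc]
    rwa [Metric.mem_eball, edist_zero_right, ← ofReal_norm, ENNReal.ofReal_lt_one]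
  exact ((ordinaryHypergeometricSeries 𝔸 a b c).hasSum hball).congr_fun fun n ↦
    (ordinaryHypergeometricSeries_apply_eq a b c x n).symm

theorem ordinaryHypergeometric_eq_one_add_tsum
    (habc : ∀ n : ℕ, (n : 𝕂) ≠ -a ∧ (n : 𝕂) ≠ -b ∧ (n : 𝕂) ≠ -c) {x : 𝔸} (hx : ‖x‖ < 1) :
    ₂F₁ a b c x =
      1 + ∑' n, ordinaryHypergeometricCoefficient a b c (n + 1) • x ^ (n + 1) := by
  have hsum := hasSum_ordinaryHypergeometric habc hx
  rw [← hsum.tsum_eq, hsum.summable.tsum_eq_zero_add]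
  simp [ordinaryHypergeometricCoefficient]

end PowerSeries

theorem ascPochhammer_eval_eq_prod_range {R : Type*} [CommSemiring R] (n : ℕ) (a : R) :
    (ascPochhammer R n).eval a = ∏ j ∈ Finset.range n, (a + j) := by
  induction n with
  | zero => simp
  | succ n ih => rw [ascPochhammer_succ_eval, ih, Finset.prod_range_succ]

theorem gammaSeq_eq_div_ascPochhammer (a : ℂ) (n : ℕ) :
    Complex.GammaSeq a n =
      (n : ℂ) ^ a * n.factorial / (ascPochhammer ℂ (n + 1)).eval a := by
  rw [Complex.GammaSeq, ascPochhammer_eval_eq_prod_range]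

theorem succ_mul_ordinaryHypergeometricCoefficient_succ (a b : ℂ) {n : ℕ} (hn : n ≠ 0) :
    ((n : ℂ) + 1) * ordinaryHypergeometricCoefficient a b (a + b) (n + 1) =
      Complex.GammaSeq (a + b) n / (Complex.GammaSeq a n * Complex.GammaSeq b n) := by
  have hn' : (n : ℂ) ≠ 0 := Nat.cast_ne_zero.2 hn
  have hsucc : (n : ℂ) + 1 ≠ 0 := Nat.cast_add_one_ne_zero n
  have hfact : (n.factorial : ℂ) ≠ 0 := Nat.cast_ne_zero.2 n.factorial_ne_zero
  have ha : (n : ℂ) ^ a ≠ 0 := by simp [Complex.cpow_eq_zero_iff, hn']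
  have hb : (n : ℂ) ^ b ≠ 0 := by simp [Complex.cpow_eq_zero_iff, hn']
  simp only [gammaSeq_eq_div_ascPochhammer, ordinaryHypergeometricCoefficient,
    Complex.cpow_add _ _ hn', Nat.factorial_succ, Nat.cast_mul, Nat.cast_succ]
  field_simp

theorem tendsto_succ_mul_ordinaryHypergeometricCoefficient_succ {a b : ℂ}
    (ha : ∀ n : ℕ, a ≠ -n) (hb : ∀ n : ℕ, b ≠ -n) :
    Tendsto (fun n : ℕ ↦
        ((n : ℂ) + 1) * ordinaryHypergeometricCoefficient a b (a + b) (n + 1)) atTop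
      (𝓝 (Complex.Gamma (a + b) / (Complex.Gamma a * Complex.Gamma b))) := by
  have hΓ : Complex.Gamma a * Complex.Gamma b ≠ 0 :=
    mul_ne_zero (Complex.Gamma_ne_zero ha) (Complex.Gamma_ne_zero hb)
  refine ((Complex.GammaSeq_tendsto_Gamma (a + b)).div ((Complex.GammaSeq_tendsto_Gamma a).mul
    (Complex.GammaSeq_tendsto_Gamma b)) hΓ).congr' ?_
  filter_upwards [eventually_ne_atTop 0] with n hn
  exact (succ_mul_ordinaryHypergeometricCoefficient_succ a b hn).symm

theorem connection_asymptotics_log_general {a b : ℂ} (ha : ∀ n : ℕ, a ≠ -n)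
    (hb : ∀ n : ℕ, b ≠ -n) (hab : ∀ n : ℕ, a + b ≠ -n) :
    Tendsto
      (fun z : ℝ => ₂F₁ a b (a + b) ((1 - z : ℝ) : ℂ) / ((Real.log (1 / z) : ℝ) : ℂ))
      (𝓝[>] 0)
      (𝓝 (Complex.Gamma (a + b) / (Complex.Gamma a * Complex.Gamma b))) := by
  have habc (n : ℕ) : (n : ℂ) ≠ -a ∧ (n : ℂ) ≠ -b ∧ (n : ℂ) ≠ -(a + b) :=
    ⟨fun h ↦ ha n (by simp [h]), fun h ↦ hb n (by simp [h]), fun h ↦ hab n (by simp [h])⟩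
  have hinv : Tendsto (fun z : ℝ ↦ (((Real.log (1 / z))⁻¹ : ℝ) : ℂ)) (𝓝[>] 0) (𝓝 0) :=
    (Complex.continuous_ofReal.tendsto' 0 0 rfl).comp
      tendsto_log_one_div_nhdsGT_zero.inv_tendsto_atTop
  have htail := tendsto_inv_log_smul_tsum_pow_smul
    (c := fun n ↦ ordinaryHypergeometricCoefficient a b (a + b) (n + 1))
    (by simpa using tendsto_succ_mul_ordinaryHypergeometricCoefficient_succ ha hb)
  refine (zero_add (Complex.Gamma (a + b) / _) ▸ hinv.add htail).congr' ?_
  filter_upwards [Ioo_mem_nhdsGT one_pos] with z hz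
  have hz_norm : ‖((1 - z : ℝ) : ℂ)‖ < 1 := by
    rw [Complex.norm_real, Real.norm_of_nonneg (sub_nonneg.2 hz.2.le)]
    exact sub_lt_self 1 hz.1
  have hreal_smul (n : ℕ) (w : ℂ) :
      (1 - z) ^ (n + 1) • w = w • ((1 - z : ℝ) : ℂ) ^ (n + 1) := by
    rw [Complex.real_smul, Complex.ofReal_pow, smul_eq_mul, mul_comm]
  simp only [hreal_smul]
  rw [ordinaryHypergeometric_eq_one_add_tsum habc hz_norm, Complex.real_smul, Complex.ofReal_inv,
    ← mul_one_add, inv_mul_eq_div]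

theorem connection_asymptotics_log (s : ℂ) (hs : ∀ m : ℤ, m ≠ 0 → s ≠ (m : ℂ)) :
    Tendsto
      (fun z : ℝ =>
        ₂F₁ (1 + s) (1 - s) (2 : ℂ) (((1 - z : ℝ)) : ℂ) / ((Real.log (1 / z) : ℝ) : ℂ))
      (𝓝[>] (0 : ℝ))
      (𝓝 (1 / (Complex.Gamma (1 + s) * Complex.Gamma (1 - s)))) := by
  have hadd : 1 + s + (1 - s) = 2 := by ring
  have hplus (n : ℕ) : 1 + s ≠ -n := fun h ↦
    hs (-(n + 1)) (by omega) (by push_cast; linear_combination h)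
  have hminus (n : ℕ) : 1 - s ≠ -n := fun h ↦
    hs (n + 1) (by omega) (by push_cast; linear_combination -h)
  have htwo (n : ℕ) : 1 + s + (1 - s) ≠ -n := fun h ↦
    (Nat.cast_ne_zero (R := ℂ)).2 (n + 1).succ_ne_zero (by push_cast; linear_combination h)
  simpa only [hadd, Complex.Gamma_ofNat_eq_factorial, Nat.factorial_one, Nat.cast_one] using
    connection_asymptotics_log_general hplus hminus htwo
end
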